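/- arXiv:1101.1827 — 8 statements merged into one kernel-verified Lean document; each statement's English description precedes it below -/
import Mathlib

section
/- Let k, λ ∈ ℝ and let u ∈ C²([0,1], ℝ) satisfy the equation k²(k²u(x)² + u'(x)²)u(x) − ((k²u(x)² + u'(x)²)u'(x))' = λ u(x)³ for all x ∈ [0,1]. Then the function x ↦ 3u'(x)⁴ + 2k²u(x)²u'(x)² − (k⁴ − λ)u(x)⁴ is constant on [0,1]. -/
/-!
Expanding `((k²u² + u'²)u')'` by the product rule turns the equation into
`(k⁴ - λ)u³ - k²uu'² - (3u'² + k²u²)u'' = 0`. Multiplying its left-hand side by `-4u'` gives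
exactly the derivative of `3u'⁴ + 2k²u²u'² - (k⁴ - λ)u⁴`, which therefore vanishes on `[0,1]`,
so that the mean value inequality makes this function constant there.
-/

open Set

/-- First integral for the perturbed `p`-Laplacian with `p = 4`:
if `u ∈ C²([0,1])` satisfies `k²(k²u² + u'²)u − ((k²u² + u'²)u')' = λu³` on `[0,1]`,
then `x ↦ 3u'⁴ + 2k²u²u'² − (k⁴ − λ)u⁴` is constant on `[0,1]`. -/
theorem stmt_3 (k lam : ℝ) (u : ℝ → ℝ) (hu : ContDiff ℝ 2 u)
    (heq : ∀ x ∈ Icc (0:ℝ) 1,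
      k ^ 2 * (k ^ 2 * (u x) ^ 2 + (deriv u x) ^ 2) * u x
        - deriv (fun y : ℝ => (k ^ 2 * (u y) ^ 2 + (deriv u y) ^ 2) * deriv u y) x
        = lam * (u x) ^ 3) :
    ∀ x ∈ Icc (0:ℝ) 1, ∀ y ∈ Icc (0:ℝ) 1,
      3 * (deriv u x) ^ 4 + 2 * k ^ 2 * (u x) ^ 2 * (deriv u x) ^ 2
        - (k ^ 4 - lam) * (u x) ^ 4
      = 3 * (deriv u y) ^ 4 + 2 * k ^ 2 * (u y) ^ 2 * (deriv u y) ^ 2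
        - (k ^ 4 - lam) * (u y) ^ 4 := by
  have hd : ContDiff ℝ 1 (deriv u) := by
    have h2 : ContDiff ℝ (1 + 1) u := by simpa [one_add_one_eq_two] using hu
    exact (contDiff_succ_iff_deriv.mp h2).2.2
  have h1 (x : ℝ) : HasDerivAt u (deriv u x) x :=
    ((hu.differentiable (by norm_num)) x).hasDerivAt
  have h2 (x : ℝ) : HasDerivAt (deriv u) (deriv (deriv u) x) x :=
    ((hd.differentiable (by norm_num)) x).hasDerivAt
  -- The derivative of the first integral is `-4 u'` times the expanded equation.
  have hF : ∀ x ∈ Icc (0:ℝ) 1, HasDerivAt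
      (fun x => 3 * (deriv u x) ^ 4 + 2 * k ^ 2 * (u x) ^ 2 * (deriv u x) ^ 2
        - (k ^ 4 - lam) * (u x) ^ 4) 0 x := by
    intro x hx
    have hP := ((((h1 x).pow 2).const_mul (k ^ 2)).add ((h2 x).pow 2)).mul (h2 x)
    have e := heq x hx
    have hP' : deriv (fun y : ℝ => (k ^ 2 * (u y) ^ 2 + (deriv u y) ^ 2) * deriv u y) x = _ :=
      hP.deriv
    rw [hP'] at e
    have hG := ((((h2 x).pow 4).const_mul 3).add
      ((((h1 x).pow 2).const_mul (2 * k ^ 2)).mul ((h2 x).pow 2))).sub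
      (((h1 x).pow 4).const_mul (k ^ 4 - lam))
    refine hG.congr_deriv ?_
    simp only [Pi.add_apply, Pi.pow_apply] at e ⊢
    push_cast at e ⊢
    linear_combination (-4 * deriv u x) * e
  intro x hx y hy
  have h := (convex_Icc (0:ℝ) 1).norm_image_sub_le_of_norm_hasDerivWithin_le (C := 0)
    (fun z hz => (hF z hz).hasDerivWithinAt) (fun z _ => by simp) hy hx
  rw [zero_mul] at h
  exact sub_eq_zero.mp (norm_le_zero_iff.mp h)
end

section
/- Let k, λ ∈ ℝ with λ ≤ k⁴. Suppose u ∈ C²([0,1], ℝ) satisfies k²(k²u(x)² + u'(x)²)u(x) − ((k²u(x)² + u'(x)²)u'(x))' = λ u(x)³ for all x ∈ [0,1] and u(0) = u(1) = 0. Then u is identically zero on [0,1]. -/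
open Set

/-!
Write `W = (k²u² + u'²)u'`. The equation gives
`(W u)' = (k⁴ - λ)u⁴ + 2k²u²u'² + u'⁴ ≥ u'⁴ ≥ 0` on `[0,1]`, so `W u` is monotone there. It vanishes
at both endpoints, hence identically, so `u'⁴ ≤ (W u)' = 0` in the interior and `u` is constant,
equal to `u 0 = 0`.
-/

/-- If `λ ≤ k⁴` and `u ∈ C²([0,1])` solves the Dirichlet problem
`k²(k²u² + u'²)u − ((k²u² + u'²)u')' = λu³` on `[0,1]` with `u(0) = u(1) = 0`,
then `u ≡ 0` on `[0,1]`. -/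
theorem stmt_10 (k lam : ℝ) (h : lam ≤ k ^ 4) (u : ℝ → ℝ) (hu : ContDiff ℝ 2 u)
    (heq : ∀ x ∈ Icc (0:ℝ) 1,
      k ^ 2 * (k ^ 2 * (u x) ^ 2 + (deriv u x) ^ 2) * u x
        - deriv (fun y : ℝ => (k ^ 2 * (u y) ^ 2 + (deriv u y) ^ 2) * deriv u y) x
        = lam * (u x) ^ 3)
    (h0 : u 0 = 0) (h1 : u 1 = 0) :
    ∀ x ∈ Icc (0:ℝ) 1, u x = 0 := by
  have hu1 : Differentiable ℝ u := hu.differentiable (by norm_num)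
  have hu2 : Differentiable ℝ (deriv u) :=
    ((contDiff_succ_iff_deriv (n := 1)).1 hu).2.2.differentiable (by norm_num)
  set W : ℝ → ℝ := fun y : ℝ => (k ^ 2 * (u y) ^ 2 + (deriv u y) ^ 2) * deriv u y with hW
  have hWd : Differentiable ℝ W := by
    rw [hW]; fun_prop
  have hder : ∀ x, deriv (fun y => W y * u y) x = deriv W x * u x + W x * deriv u x :=
    fun x => ((hWd x).hasDerivAt.mul (hu1 x).hasDerivAt).deriv
  have hbound : ∀ x ∈ Icc (0:ℝ) 1, (deriv u x) ^ 4 ≤ deriv (fun y => W y * u y) x := by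
    intro x hx
    have hWx : W x = (k ^ 2 * (u x) ^ 2 + (deriv u x) ^ 2) * deriv u x := rfl
    have e : deriv (fun y => W y * u y) x
        = (k ^ 4 - lam) * (u x) ^ 4 + 2 * (k * u x * deriv u x) ^ 2 + (deriv u x) ^ 4 := by
      rw [hder, hWx]
      linear_combination (-u x) * heq x hx
    have hn : 0 ≤ (k ^ 4 - lam) * (u x) ^ 4 := mul_nonneg (sub_nonneg.2 h) (by positivity)
    rw [e]
    nlinarith [sq_nonneg (k * u x * deriv u x)]
  have hmono : MonotoneOn (fun y => W y * u y) (Icc 0 1) := by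
    refine monotoneOn_of_deriv_nonneg (convex_Icc 0 1) (hWd.mul hu1).continuous.continuousOn
      (hWd.mul hu1).differentiableOn fun x hx => ?_
    exact le_trans (by positivity) (hbound x (interior_subset hx))
  have hzero : ∀ x ∈ Icc (0:ℝ) 1, W x * u x = 0 := by
    intro x hx
    have a := hmono (left_mem_Icc.2 zero_le_one) hx hx.1
    have b := hmono hx (right_mem_Icc.2 zero_le_one) hx.2
    simp only [h0, h1, mul_zero] at a b
    exact le_antisymm b a
  have hu' : ∀ x ∈ interior (Icc (0:ℝ) 1), deriv u x = 0 := by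
    intro x hx
    have hev : (fun y => W y * u y) =ᶠ[nhds x] fun _ => 0 := by
      filter_upwards [mem_interior_iff_mem_nhds.1 hx] with y hy using hzero y hy
    have hb := hbound x (interior_subset hx)
    rw [hev.deriv_eq, deriv_const] at hb
    exact pow_eq_zero_iff (by norm_num) |>.1 (le_antisymm hb (by positivity))
  intro x hx
  have hm : MonotoneOn u (Icc 0 1) :=
    monotoneOn_of_deriv_nonneg (convex_Icc 0 1) hu1.continuous.continuousOn
      hu1.differentiableOn fun y hy => (hu' y hy).ge
  have a := hm (left_mem_Icc.2 zero_le_one) hx hx.1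
  have b := hm hx (right_mem_Icc.2 zero_le_one) hx.2
  linarith
end

section
/- Let p > 1, ν ≥ 0, λ ∈ ℝ, and let u ∈ C¹([0,1], ℝ) be not identically zero with u(0) = u(1) = 0. If ∫₀¹ (ν u(x)² + u'(x)²)^{p/2} dx = λ ∫₀¹ |u(x)|^p dx, then ν^{p/2} < λ. -/
/-!
Pointwise, `ν^(p/2) |u|^p = (ν u²)^(p/2) ≤ (ν u² + u'²)^(p/2)`, strictly wherever `u' ≠ 0`. By the
mean value theorem such a point exists, so, both sides being continuous, integrating gives
`ν^(p/2) ∫ |u|^p < ∫ (ν u² + u'²)^(p/2) = λ ∫ |u|^p`. Cancelling the nonnegative factor `∫ |u|^p`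
gives the claim.
-/

open MeasureTheory Set

/-- Let `p > 1`, `ν ≥ 0`, and let `u ∈ C¹([0,1])` be not identically
zero with `u(0) = u(1) = 0`. If `∫₀¹ (νu² + u'²)^(p/2) = λ ∫₀¹ |u|^p`, then
`ν^(p/2) < λ`. -/
theorem stmt_12 (p nu lam : ℝ) (hp : 1 < p) (hnu : 0 ≤ nu)
    (u : ℝ → ℝ) (hu : ContDiff ℝ 1 u)
    (hne : ∃ x ∈ Icc (0:ℝ) 1, u x ≠ 0)
    (h0 : u 0 = 0) (h1 : u 1 = 0)
    (heq : (∫ x in (0:ℝ)..1, (nu * (u x) ^ 2 + (deriv u x) ^ 2) ^ (p / 2))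
      = lam * ∫ x in (0:ℝ)..1, |u x| ^ p) :
    nu ^ (p / 2) < lam := by
  -- `u` vanishes at `0` but not identically, so `u'` is nonzero somewhere in the open interval.
  obtain ⟨c, hc, hdc⟩ : ∃ c ∈ Icc (0:ℝ) 1, deriv u c ≠ 0 := by
    obtain ⟨x, hx, hux⟩ := hne
    have hx0 : 0 < x := lt_of_le_of_ne hx.1 (by rintro rfl; exact hux h0)
    obtain ⟨c, hc, hd⟩ := exists_deriv_eq_slope u hx0 hu.continuous.continuousOn
      (hu.differentiable one_ne_zero).differentiableOn
    refine ⟨c, ⟨hc.1.le, hc.2.le.trans hx.2⟩, ?_⟩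
    rw [hd, h0, sub_zero, sub_zero]
    exact div_ne_zero hux hx0.ne'
  have hp2 : 0 < p / 2 := by linarith
  have hpow : ∀ x, nu ^ (p / 2) * |u x| ^ p = (nu * (u x) ^ 2) ^ (p / 2) := by
    intro x
    rw [Real.mul_rpow hnu (sq_nonneg _), ← sq_abs (u x), ← Real.rpow_natCast |u x| 2,
      ← Real.rpow_mul (abs_nonneg _)]
    congr 2
    push_cast
    ring
  have hcd : Continuous (deriv u) := hu.continuous_deriv le_rfl
  have hcu : Continuous u := hu.continuous
  have hlt : (∫ x in (0:ℝ)..1, nu ^ (p / 2) * |u x| ^ p)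
      < ∫ x in (0:ℝ)..1, (nu * (u x) ^ 2 + (deriv u x) ^ 2) ^ (p / 2) := by
    simp only [hpow]
    refine intervalIntegral.integral_lt_integral_of_continuousOn_of_le_of_exists_lt one_pos
      ?_ ?_ (fun x _ => ?_) ⟨c, hc, ?_⟩
    · exact (Continuous.rpow_const (by fun_prop) fun _ => Or.inr hp2.le).continuousOn
    · exact (Continuous.rpow_const (by fun_prop) fun _ => Or.inr hp2.le).continuousOn
    · exact Real.rpow_le_rpow (by positivity) (le_add_of_nonneg_right (sq_nonneg _)) hp2.le
    · exact Real.rpow_lt_rpow (by positivity) (lt_add_of_pos_right _ (by positivity)) hp2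
  rw [intervalIntegral.integral_const_mul, heq] at hlt
  exact lt_of_mul_lt_mul_right hlt
    (intervalIntegral.integral_nonneg zero_le_one fun x _ => by positivity)
end

section
/- Let p > 1 and let u ∈ C¹([0,1], ℝ) be not identically zero with u(0) = u(1) = 0. Let λ ∈ ℝ satisfy λ ∫₀¹ |u(x)|^p dx > ∫₀¹ |u'(x)|^p dx. Then there exists a unique ν > 0 such that ∫₀¹ (ν u(x)² + u'(x)²)^{p/2} dx = λ ∫₀¹ |u(x)|^p dx; moreover this ν satisfies ν < λ^{2/p}. -/
open MeasureTheory Set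

/-!
Write `F ν = ∫₀¹ (ν u² + u'²)^(p/2)`. It is continuous in `ν`, and strictly increasing on `[0, ∞)`
because `u` is nonzero at some point of `[0, 1]`. Its value `F 0 = ∫₀¹ |u'|^p` is below
`λ ∫₀¹ |u|^p` by hypothesis, which also forces `λ > 0`. At `Λ = λ^(2/p)` one has
`F Λ > Λ^(p/2) ∫₀¹ |u|^p = λ ∫₀¹ |u|^p`, strictly because `u'` does not vanish identically
(`u` is nonzero somewhere and `u 0 = 0`). The intermediate value theorem gives a root in `(0, Λ)`,
and strict monotonicity makes it unique.
-/

/-- The integrand is jointly continuous, also where its base vanishes, since `p / 2 > 0`. -/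
lemma continuous_rootIntegrand {p : ℝ} (hp : 1 < p) {u : ℝ → ℝ} (hu : ContDiff ℝ 1 u) :
    Continuous (fun z : ℝ × ℝ => (z.1 * (u z.2) ^ 2 + (deriv u z.2) ^ 2) ^ (p / 2)) := by
  have hc := hu.continuous
  have hd := hu.continuous_deriv le_rfl
  refine Continuous.rpow_const (by fun_prop) fun _ => Or.inr (by linarith)

lemma sq_rpow_half (a p : ℝ) : (a ^ 2) ^ (p / 2) = |a| ^ p := by
  rw [← sq_abs, ← Real.rpow_natCast, ← Real.rpow_mul (abs_nonneg a)]
  congr 1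
  push_cast
  ring

lemma strictMonoOn_rootIntegral {p : ℝ} (hp : 1 < p) {u : ℝ → ℝ} (hu : ContDiff ℝ 1 u)
    (hne : ∃ x ∈ Icc (0:ℝ) 1, u x ≠ 0) :
    StrictMonoOn (fun nu : ℝ =>
      ∫ x in (0:ℝ)..1, (nu * (u x) ^ 2 + (deriv u x) ^ 2) ^ (p / 2)) (Ici 0) := by
  intro a ha b _ hab
  have ha : 0 ≤ a := ha
  have hc : ∀ nu : ℝ, Continuous fun x => (nu * (u x) ^ 2 + (deriv u x) ^ 2) ^ (p / 2) :=
    fun nu => (continuous_rootIntegrand hp hu).comp (Continuous.prodMk_right nu)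
  obtain ⟨x, hx, hux⟩ := hne
  refine intervalIntegral.integral_lt_integral_of_continuousOn_of_le_of_exists_lt one_pos
    (hc a).continuousOn (hc b).continuousOn (fun y _ => ?_) ⟨x, hx, ?_⟩
  · exact Real.rpow_le_rpow (by positivity) (by gcongr) (by linarith)
  · exact Real.rpow_lt_rpow (by positivity) (by gcongr) (by linarith)

lemma exists_deriv_ne_zero {u : ℝ → ℝ} (hu : ContDiff ℝ 1 u)
    (hne : ∃ x ∈ Icc (0:ℝ) 1, u x ≠ 0) (h0 : u 0 = 0) :
    ∃ x ∈ Icc (0:ℝ) 1, deriv u x ≠ 0 := by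
  obtain ⟨x, hx, hux⟩ := hne
  have hx0 : 0 < x := lt_of_le_of_ne hx.1 (by rintro rfl; exact hux h0)
  obtain ⟨c, hc, h⟩ := exists_deriv_eq_slope u hx0 hu.continuous.continuousOn
    (hu.differentiable one_ne_zero).differentiableOn
  refine ⟨c, ⟨hc.1.le, hc.2.le.trans hx.2⟩, ?_⟩
  rw [h, h0, sub_zero, sub_zero]
  exact div_ne_zero hux hx0.ne'

/-- The lower bound that yields `ν < λ^(2/p)`; it is strict because `u'` is not identically `0`. -/
lemma rpow_mul_integral_lt {p : ℝ} (hp : 1 < p) {u : ℝ → ℝ} (hu : ContDiff ℝ 1 u)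
    (hd : ∃ x ∈ Icc (0:ℝ) 1, deriv u x ≠ 0) {nu : ℝ} (hnu : 0 ≤ nu) :
    nu ^ (p / 2) * (∫ x in (0:ℝ)..1, |u x| ^ p) <
      ∫ x in (0:ℝ)..1, (nu * (u x) ^ 2 + (deriv u x) ^ 2) ^ (p / 2) := by
  have hc : Continuous fun x => (nu * (u x) ^ 2 + (deriv u x) ^ 2) ^ (p / 2) :=
    (continuous_rootIntegrand hp hu).comp (Continuous.prodMk_right nu)
  have hcu : Continuous fun x => nu ^ (p / 2) * |u x| ^ p :=
    continuous_const.mul (hu.continuous.abs.rpow_const fun _ => Or.inr (by linarith))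
  have heq : ∀ x, nu ^ (p / 2) * |u x| ^ p = (nu * (u x) ^ 2) ^ (p / 2) := fun x => by
    rw [Real.mul_rpow hnu (sq_nonneg _), sq_rpow_half]
  obtain ⟨x, hx, hdx⟩ := hd
  rw [← intervalIntegral.integral_const_mul]
  refine intervalIntegral.integral_lt_integral_of_continuousOn_of_le_of_exists_lt one_pos
    hcu.continuousOn hc.continuousOn (fun y _ => ?_) ⟨x, hx, ?_⟩
  · rw [heq]
    exact Real.rpow_le_rpow (by positivity) (le_add_of_nonneg_right (sq_nonneg _)) (by linarith)
  · rw [heq]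
    exact Real.rpow_lt_rpow (by positivity) (lt_add_of_pos_right _ (by positivity)) (by linarith)

/-- Let `p > 1`, `u ∈ C¹([0,1])` not identically zero with
`u(0) = u(1) = 0`, and `λ` with `λ∫₀¹|u|^p > ∫₀¹|u'|^p`. Then there is a unique `ν > 0`
with `∫₀¹ (νu² + u'²)^(p/2) = λ∫₀¹|u|^p`, and this `ν` satisfies `ν < λ^(2/p)`. -/
theorem stmt_14 (p lam : ℝ) (hp : 1 < p)
    (u : ℝ → ℝ) (hu : ContDiff ℝ 1 u)
    (hne : ∃ x ∈ Icc (0:ℝ) 1, u x ≠ 0)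
    (h0 : u 0 = 0) (h1 : u 1 = 0)
    (hlam : (∫ x in (0:ℝ)..1, |deriv u x| ^ p) < lam * ∫ x in (0:ℝ)..1, |u x| ^ p) :
    ∃ nu : ℝ, (0 < nu ∧
        (∫ x in (0:ℝ)..1, (nu * (u x) ^ 2 + (deriv u x) ^ 2) ^ (p / 2))
          = lam * ∫ x in (0:ℝ)..1, |u x| ^ p ∧
        nu < lam ^ (2 / p)) ∧
      ∀ nu' : ℝ, 0 < nu' →
        (∫ x in (0:ℝ)..1, (nu' * (u x) ^ 2 + (deriv u x) ^ 2) ^ (p / 2))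
          = lam * ∫ x in (0:ℝ)..1, |u x| ^ p → nu' = nu := by
  have hA : 0 ≤ ∫ x in (0:ℝ)..1, |u x| ^ p :=
    intervalIntegral.integral_nonneg zero_le_one fun x _ => by positivity
  have hB : 0 ≤ ∫ x in (0:ℝ)..1, |deriv u x| ^ p :=
    intervalIntegral.integral_nonneg zero_le_one fun x _ => by positivity
  have hl : 0 < lam := pos_of_mul_pos_left (hB.trans_lt hlam) hA
  have hmono := strictMonoOn_rootIntegral hp hu hne
  have hcont : Continuous (fun nu : ℝ =>
      ∫ x in (0:ℝ)..1, (nu * (u x) ^ 2 + (deriv u x) ^ 2) ^ (p / 2)) :=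
    intervalIntegral.continuous_parametric_intervalIntegral_of_continuous'
      (continuous_rootIntegrand hp hu) 0 1
  have hL : 0 ≤ lam ^ (2 / p) := by positivity
  have htop := rpow_mul_integral_lt hp hu (exists_deriv_ne_zero hu hne h0) hL
  have hpow : (lam ^ (2 / p)) ^ (p / 2) = lam := by
    rw [← Real.rpow_mul hl.le, show 2 / p * (p / 2) = 1 by field_simp, Real.rpow_one]
  rw [hpow] at htop
  have hbot : (∫ x in (0:ℝ)..1, ((0:ℝ) * (u x) ^ 2 + (deriv u x) ^ 2) ^ (p / 2)) <
      lam * ∫ x in (0:ℝ)..1, |u x| ^ p := by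
    simpa only [zero_mul, zero_add, sq_rpow_half] using hlam
  obtain ⟨nu, hnu, hroot⟩ := intermediate_value_Ioo hL hcont.continuousOn ⟨hbot, htop⟩
  exact ⟨nu, ⟨hnu.1, hroot, hnu.2⟩, fun nu' hnu' h =>
    hmono.injOn (mem_Ici.2 hnu'.le) (mem_Ici.2 hnu.1.le) (h.trans hroot.symm)⟩
end

section
/- Let p ≥ 2, λ ∈ ℝ, and let u, v ∈ C¹([0,1], ℝ) with u not identically zero. Let ε > 0 and let g : (−ε, ε) → (0, ∞) be differentiable at 0, and suppose that for all t ∈ (−ε, ε), ∫₀¹ (g(t)(u(x)+tv(x))² + (u'(x)+tv'(x))²)^{p/2} dx = λ ∫₀¹ |u(x)+tv(x)|^p dx. Set ν := g(0). Then g'(0) = 2·[λ ∫₀¹ |u|^{p−2} u v dx − ν ∫₀¹ (νu² + u'²)^{(p−2)/2} u v dx − ∫₀¹ (νu² + u'²)^{(p−2)/2} u' v' dx] / ∫₀¹ (νu² + u'²)^{(p−2)/2} u² dx. -/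
/-!
Both sides of the defining equation are differentiated at `t = 0` and the two derivatives are
compared; the resulting linear equation for `g'(0)` is solved by dividing by
`∫ (νu² + u'²)^((p-2)/2) u²`, which is positive because `ν > 0` and `u ≢ 0`.

Both sides have the shape `t ↦ ∫ (h(t)(a + tb)² + (c + td)²)^q` with `q = p/2 ≥ 1`: the left one with
`h = g`, and the right one with `h = 1`, `c = d = 0`, since `|s|^p = (s²)^(p/2)`. The lemma
`hasDerivAt_energy` differentiates such an integral. As `g` is only assumed differentiable at the
single point `0`, the integrand need not be Lipschitz in `t` near `0`; dominated convergence only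
requires the difference quotients based at `0` to be bounded, which follows from
`|h t - h 0| ≤ C |t|` and the Lipschitz bound for `s ↦ s^q` on bounded intervals.
-/

open MeasureTheory Set

lemma abs_rpow_sub_rpow_le {q M a b : ℝ} (hq : 1 ≤ q) (ha : 0 ≤ a) (haM : a ≤ M)
    (hb : 0 ≤ b) (hbM : b ≤ M) : |b ^ q - a ^ q| ≤ q * M ^ (q - 1) * |b - a| := by
  refine Convex.norm_image_sub_le_of_norm_hasDerivWithin_le (f := fun x : ℝ => x ^ q)
    (f' := fun x => q * x ^ (q - 1)) (s := Icc 0 M) ?_ ?_ (convex_Icc 0 M) ⟨ha, haM⟩ ⟨hb, hbM⟩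
  · intro x _
    exact (Real.hasDerivAt_rpow_const (Or.inr hq)).hasDerivWithinAt
  · intro x hx
    have h1 : 0 ≤ x ^ (q - 1) := Real.rpow_nonneg hx.1 _
    have h2 : x ^ (q - 1) ≤ M ^ (q - 1) := Real.rpow_le_rpow hx.1 hx.2 (by linarith)
    rw [Real.norm_of_nonneg (by positivity)]
    gcongr

/-- With `H = h t` and `H0 = h 0`, the base of the power in the integrand moves by `O(|t|)`,
uniformly for `a, b, c, d` in a bounded set. -/
lemma abs_base_sub_le {a b c d K C t H H0 : ℝ} (hK : 0 ≤ K) (ha : |a| ≤ K) (hb : |b| ≤ K)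
    (hc : |c| ≤ K) (hd : |d| ≤ K) (ht : |t| ≤ 1) (hH : |H - H0| ≤ C * |t|) :
    |(H * (a + t * b) ^ 2 + (c + t * d) ^ 2) - (H0 * a ^ 2 + c ^ 2)| ≤
      (C * (2 * K) ^ 2 + |H0| * (3 * K ^ 2) + 3 * K ^ 2) * |t| := by
  have key : ∀ a b : ℝ, |a| ≤ K → |b| ≤ K → |2 * a * b + t * b ^ 2| ≤ 3 * K ^ 2 := by
    intro a b ha hb
    calc |2 * a * b + t * b ^ 2| ≤ |2 * a * b| + |t * b ^ 2| := abs_add_le _ _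
      _ = 2 * |a| * |b| + |t| * |b| ^ 2 := by simp [abs_mul]
      _ ≤ 2 * K * K + 1 * K ^ 2 := by gcongr
      _ = 3 * K ^ 2 := by ring
  have h1 : |a + t * b| ≤ 2 * K := by
    calc |a + t * b| ≤ |a| + |t * b| := abs_add_le _ _
      _ = |a| + |t| * |b| := by rw [abs_mul]
      _ ≤ K + 1 * K := by gcongr
      _ = 2 * K := by ring
  have e : (H * (a + t * b) ^ 2 + (c + t * d) ^ 2) - (H0 * a ^ 2 + c ^ 2)
      = (H - H0) * (a + t * b) ^ 2 + H0 * (2 * a * b + t * b ^ 2) * t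
        + (2 * c * d + t * d ^ 2) * t := by ring
  rw [e]
  calc _ ≤ |(H - H0) * (a + t * b) ^ 2| + |H0 * (2 * a * b + t * b ^ 2) * t|
        + |(2 * c * d + t * d ^ 2) * t| := abs_add_three _ _ _
    _ = |H - H0| * |a + t * b| ^ 2 + |H0| * |2 * a * b + t * b ^ 2| * |t|
        + |2 * c * d + t * d ^ 2| * |t| := by simp only [abs_mul, abs_pow]
    _ ≤ (C * |t|) * (2 * K) ^ 2 + |H0| * (3 * K ^ 2) * |t| + (3 * K ^ 2) * |t| := by
        have := key a b ha hb
        have := key c d hc hd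
        have : 0 ≤ C * |t| := (abs_nonneg _).trans hH
        gcongr
    _ = _ := by ring

lemma sq_rpow_half_s15 (s r : ℝ) : (s ^ 2) ^ (r / 2) = |s| ^ r := by
  rw [← sq_abs, ← Real.rpow_natCast_mul (abs_nonneg s)]
  congr 1
  push_cast
  ring

lemma exists_abs_le_of_continuous {f : ℝ → ℝ} (hf : Continuous f) :
    ∃ K, 0 ≤ K ∧ ∀ x ∈ Icc (0:ℝ) 1, |f x| ≤ K := by
  obtain ⟨K, hK⟩ := isCompact_Icc.exists_bound_of_continuousOn (s := Icc (0:ℝ) 1) hf.continuousOn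
  exact ⟨K, (abs_nonneg _).trans (hK 0 (by simp)), hK⟩

/-- Differentiation under the integral sign when the coefficient `h` is differentiable at `0`
only. -/
lemma hasDerivAt_energy {q : ℝ} (hq : 1 ≤ q) {a b c d : ℝ → ℝ} (ha : Continuous a)
    (hb : Continuous b) (hc : Continuous c) (hd : Continuous d) {h : ℝ → ℝ} {h' : ℝ}
    (hh : HasDerivAt h h' 0) (hpos : ∀ᶠ t in nhds 0, 0 ≤ h t) :
    HasDerivAt
      (fun t => ∫ x in (0:ℝ)..1, (h t * (a x + t * b x) ^ 2 + (c x + t * d x) ^ 2) ^ q)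
      (∫ x in (0:ℝ)..1, (h' * a x ^ 2 + 2 * h 0 * a x * b x + 2 * c x * d x) * q
        * (h 0 * a x ^ 2 + c x ^ 2) ^ (q - 1)) 0 := by
  obtain ⟨Ka, hKa0, hKa⟩ := exists_abs_le_of_continuous ha
  obtain ⟨Kb, hKb0, hKb⟩ := exists_abs_le_of_continuous hb
  obtain ⟨Kc, hKc0, hKc⟩ := exists_abs_le_of_continuous hc
  obtain ⟨Kd, hKd0, hKd⟩ := exists_abs_le_of_continuous hd
  obtain ⟨K, hK⟩ : ∃ K, K = Ka + Kb + Kc + Kd := ⟨_, rfl⟩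
  have hK0 : 0 ≤ K := by rw [hK]; positivity
  obtain ⟨M₀, hM₀0, hM₀⟩ := exists_abs_le_of_continuous
    (f := fun x => h 0 * a x ^ 2 + c x ^ 2) (by fun_prop)
  obtain ⟨C, hC0, hC⟩ := hh.isBigO_sub.exists_pos
  obtain ⟨L, hL⟩ : ∃ L, L = C * (2 * K) ^ 2 + |h 0| * (3 * K ^ 2) + 3 * K ^ 2 := ⟨_, rfl⟩
  have hL0 : 0 ≤ L := by rw [hL]; positivity
  have h0 : 0 ≤ h 0 := hpos.self_of_nhds
  have hcont : ∀ t, Continuous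
      (fun x => (h t * (a x + t * b x) ^ 2 + (c x + t * d x) ^ 2) ^ q) := fun t =>
    Continuous.rpow_const (by fun_prop) (fun x => Or.inr (by linarith))
  have hcont' : Continuous (fun x =>
      (h' * a x ^ 2 + 2 * h 0 * a x * b x + 2 * c x * d x) * q
        * (h 0 * a x ^ 2 + c x ^ 2) ^ (q - 1)) :=
    Continuous.mul (by fun_prop)
      (Continuous.rpow_const (by fun_prop) (fun x => Or.inr (by linarith)))
  have hs : {t : ℝ | 0 ≤ h t ∧ |t| ≤ 1 ∧ |h t - h 0| ≤ C * |t|} ∈ nhds (0:ℝ) := by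
    have h1 : ∀ᶠ t : ℝ in nhds 0, |t| ≤ 1 := by
      filter_upwards [Metric.ball_mem_nhds (0:ℝ) one_pos] with t ht
      have : |t| < 1 := by simpa using ht
      exact this.le
    filter_upwards [hpos, h1, hC.bound] with t h1 h2 h3
    exact ⟨h1, h2, by simpa using h3⟩
  have main := hasFDerivAt_integral_of_dominated_loc_of_lip' (𝕜 := ℝ)
    (μ := volume.restrict (Ioc (0:ℝ) 1))
    (F := fun t x => (h t * (a x + t * b x) ^ 2 + (c x + t * d x) ^ 2) ^ q)
    (F' := fun x => ContinuousLinearMap.toSpanSingleton ℝ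
      ((h' * a x ^ 2 + 2 * h 0 * a x * b x + 2 * c x * d x) * q
        * (h 0 * a x ^ 2 + c x ^ 2) ^ (q - 1)))
    (x₀ := (0:ℝ)) (bound := fun _ => q * (M₀ + L) ^ (q - 1) * L) hs
    (fun t _ => (hcont t).aestronglyMeasurable)
    (((hcont 0).integrableOn_Icc).mono_set Ioc_subset_Icc_self)
    (((ContinuousLinearMap.toSpanSingletonCLE (𝕜 := ℝ) (E := ℝ)).continuous.comp
      hcont').aestronglyMeasurable)
    ?_ (integrable_const _) ?_
  · have h2 := main.2.hasDerivAt
    simp only [intervalIntegral.integral_of_le zero_le_one]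
    rw [ContinuousLinearMap.integral_apply main.1] at h2
    simpa only [ContinuousLinearMap.toSpanSingleton_apply, one_smul] using h2
  · refine (ae_restrict_iff' measurableSet_Ioc).2 (.of_forall fun x hx t ht => ?_)
    obtain ⟨ht0, ht1, htC⟩ := ht
    have hx' := Ioc_subset_Icc_self hx
    have hB := abs_base_sub_le hK0 ((hKa x hx').trans (by linarith))
      ((hKb x hx').trans (by linarith)) ((hKc x hx').trans (by linarith))
      ((hKd x hx').trans (by linarith)) ht1 htC
    rw [← hL] at hB
    have hM := (abs_le.1 (hM₀ x hx')).2
    have hLt : L * |t| ≤ L := mul_le_of_le_one_right hL0 ht1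
    have hR := abs_rpow_sub_rpow_le (M := M₀ + L) hq
      (show 0 ≤ h 0 * a x ^ 2 + c x ^ 2 by positivity) (by linarith)
      (show 0 ≤ h t * (a x + t * b x) ^ 2 + (c x + t * d x) ^ 2 by positivity)
      (by linarith [(abs_le.1 hB).2])
    simp only [Real.norm_eq_abs, zero_mul, add_zero, sub_zero]
    refine hR.trans ?_
    rw [mul_assoc _ L]
    gcongr
  · refine .of_forall fun x => ?_
    have e1 : HasDerivAt (fun t => a x + t * b x) (b x) 0 := by
      simpa using ((hasDerivAt_id (0:ℝ)).mul_const (b x)).const_add (a x)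
    have e2 : HasDerivAt (fun t => c x + t * d x) (d x) 0 := by
      simpa using ((hasDerivAt_id (0:ℝ)).mul_const (d x)).const_add (c x)
    have e3 := ((hh.mul (e1.pow 2)).add (e2.pow 2)).rpow_const (p := q) (Or.inr hq)
    refine (e3.congr_deriv ?_).hasFDerivAt
    simp only [Pi.add_apply, Pi.mul_apply, Pi.pow_apply, zero_mul, add_zero]
    push_cast
    ring

/-- Derivative of the root functional (formula (4.6) of the paper):
if `g : (−ε, ε) → (0, ∞)` is differentiable at `0` and for all `t ∈ (−ε, ε)`
`∫₀¹ (g(t)(u+tv)² + (u'+tv')²)^(p/2) = λ∫₀¹ |u+tv|^p`, then with `ν = g(0)`,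
`g'(0) = 2[λ∫|u|^(p−2)uv − ν∫(νu²+u'²)^((p−2)/2)uv − ∫(νu²+u'²)^((p−2)/2)u'v'] /
∫(νu²+u'²)^((p−2)/2)u²`. -/
theorem stmt_15 (p lam : ℝ) (hp : 2 ≤ p) (u v : ℝ → ℝ)
    (hu : ContDiff ℝ 1 u) (hv : ContDiff ℝ 1 v)
    (hne : ∃ x ∈ Icc (0:ℝ) 1, u x ≠ 0)
    (ε : ℝ) (hε : 0 < ε) (g : ℝ → ℝ)
    (hgpos : ∀ t ∈ Ioo (-ε) ε, 0 < g t)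
    (hgdiff : DifferentiableAt ℝ g 0)
    (hgeq : ∀ t ∈ Ioo (-ε) ε,
      (∫ x in (0:ℝ)..1,
          (g t * (u x + t * v x) ^ 2 + (deriv u x + t * deriv v x) ^ 2) ^ (p / 2))
        = lam * ∫ x in (0:ℝ)..1, |u x + t * v x| ^ p) :
    deriv g 0 =
      2 * (lam * (∫ x in (0:ℝ)..1, |u x| ^ (p - 2) * u x * v x)
           - g 0 * (∫ x in (0:ℝ)..1,
              (g 0 * (u x) ^ 2 + (deriv u x) ^ 2) ^ ((p - 2) / 2) * u x * v x)
           - (∫ x in (0:ℝ)..1,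
              (g 0 * (u x) ^ 2 + (deriv u x) ^ 2) ^ ((p - 2) / 2) * deriv u x * deriv v x))
        / (∫ x in (0:ℝ)..1, (g 0 * (u x) ^ 2 + (deriv u x) ^ 2) ^ ((p - 2) / 2) * (u x) ^ 2) := by
  have hcu := hu.continuous
  have hcv := hv.continuous
  have hcu' : Continuous (deriv u) := hu.continuous_deriv le_rfl
  have hcv' : Continuous (deriv v) := hv.continuous_deriv le_rfl
  have hq : 1 ≤ p / 2 := by linarith
  have hmem : Ioo (-ε) ε ∈ nhds (0:ℝ) := Ioo_mem_nhds (by linarith) hε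
  have hg0 : 0 < g 0 := hgpos 0 ⟨by linarith, hε⟩
  have hL := hasDerivAt_energy hq hcu hcv hcu' hcv' hgdiff.hasDerivAt
    (Filter.mem_of_superset hmem fun t ht => (hgpos t ht).le)
  have hR := (hasDerivAt_energy hq hcu hcv continuous_zero continuous_zero
    (hasDerivAt_const (0:ℝ) (1:ℝ)) (.of_forall fun _ => zero_le_one)).const_mul lam
  have heq := hL.unique (hR.congr_of_eventuallyEq (by
    filter_upwards [hmem] with t ht
    rw [hgeq t ht]
    congr 2
    funext x
    simp [sq_rpow_half_s15]))
  have hexp : p / 2 - 1 = (p - 2) / 2 := by ring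
  rw [hexp] at heq
  have hcA : Continuous (fun x => (g 0 * u x ^ 2 + deriv u x ^ 2) ^ ((p - 2) / 2)) :=
    Continuous.rpow_const (by fun_prop) (fun x => Or.inr (by linarith))
  have hsplit : (∫ x in (0:ℝ)..1, (deriv g 0 * u x ^ 2 + 2 * g 0 * u x * v x
        + 2 * deriv u x * deriv v x) * (p / 2) * (g 0 * u x ^ 2 + deriv u x ^ 2) ^ ((p - 2) / 2))
      = (p / 2 * deriv g 0) * (∫ x in (0:ℝ)..1,
          (g 0 * (u x) ^ 2 + (deriv u x) ^ 2) ^ ((p - 2) / 2) * (u x) ^ 2)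
        + (p * g 0) * (∫ x in (0:ℝ)..1,
          (g 0 * (u x) ^ 2 + (deriv u x) ^ 2) ^ ((p - 2) / 2) * u x * v x)
        + p * (∫ x in (0:ℝ)..1,
          (g 0 * (u x) ^ 2 + (deriv u x) ^ 2) ^ ((p - 2) / 2) * deriv u x * deriv v x) := by
    simp only [← intervalIntegral.integral_const_mul]
    rw [← intervalIntegral.integral_add, ← intervalIntegral.integral_add]
    · congr 1
      funext x
      ring
    all_goals exact Continuous.intervalIntegrable (by fun_prop) _ _
  have hright : (∫ x in (0:ℝ)..1, (0 * u x ^ 2 + 2 * 1 * u x * v x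
        + 2 * (0 : ℝ → ℝ) x * (0 : ℝ → ℝ) x) * (p / 2)
          * (1 * u x ^ 2 + (0 : ℝ → ℝ) x ^ 2) ^ ((p - 2) / 2))
      = p * ∫ x in (0:ℝ)..1, |u x| ^ (p - 2) * u x * v x := by
    rw [← intervalIntegral.integral_const_mul]
    congr 1
    funext x
    simp only [Pi.zero_apply, one_mul, zero_pow two_ne_zero, add_zero, sq_rpow_half_s15]
    ring
  have hD : 0 < ∫ x in (0:ℝ)..1,
      (g 0 * (u x) ^ 2 + (deriv u x) ^ 2) ^ ((p - 2) / 2) * (u x) ^ 2 := by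
    obtain ⟨x, hx, hux⟩ := hne
    refine intervalIntegral.integral_pos one_pos (by fun_prop) (fun y _ => by positivity)
      ⟨x, hx, ?_⟩
    have : 0 < g 0 * u x ^ 2 + deriv u x ^ 2 := by positivity
    positivity
  rw [hsplit, hright] at heq
  rw [eq_div_iff hD.ne']
  have hp0 : p ≠ 0 := by linarith
  refine mul_left_cancel₀ hp0 ?_
  linear_combination 2 * heq
end

section
/- For real k, λ with k⁴ < λ, define π₄(λ, k) := 2 ∫₀^{(3/(λ−k⁴))^{1/4}} [−(k²/3)s² + √(k⁴s⁴/9 + 1 − ((λ−k⁴)/3)s⁴)]^{−1/2} ds. Then for every fixed k ∈ ℝ: the function λ ↦ π₄(λ, k) is strictly decreasing on (k⁴, ∞), π₄(λ, k) → +∞ as λ → k⁴⁺, and π₄(λ, k) → 0 as λ → +∞. -/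
/-!
Put `R = (3 / (λ - k⁴))^{1/4}` and rescale `s = R t`. Since `(λ - k⁴) R⁴ / 3 = 1`, this gives
`π₄(λ, k) = 2 R T(k² R² / 3)`, where `T c = ∫₀¹ (-c t² + √(c² t⁴ + 1 - t⁴))^{-1/2} dt`.

The base of the integrand of `T` lies in `(0, 1]` for `0 < t < 1`, decreases in `c ≥ 0`
(`base_anti`), and is at least `(1 - t) / (2c + 1)` (`base_lower`), because its product with
`c t² + √(c² t⁴ + 1 - t⁴)` is `1 - t⁴`. Hence `T c` is a convergent integral
(`intervalIntegrable_base_rpow`), is monotone in `c` and is at least `1`. As `R` decreases strictly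
from `+∞` to `0` when `λ` runs through `(k⁴, ∞)`, so does `2 R T(k² R² / 3)`: it is strictly
increasing in `R`, at least `2 R`, and at most `2 R T(k² / 3)` when `R ≤ 1`.
-/

open MeasureTheory Set Filter

namespace HalfPeriod

/-- The base of the integrand after rescaling the half-period integral to `[0, 1]`. -/
noncomputable def base (c t : ℝ) : ℝ :=
  -(c * t ^ 2) + Real.sqrt (c ^ 2 * t ^ 4 + 1 - t ^ 4)

/-- The rescaled half-period integral. -/
noncomputable def T (c : ℝ) : ℝ := ∫ t in (0:ℝ)..1, base c t ^ (-(1:ℝ)/2)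

lemma pow_four_le {t : ℝ} (ht : t ∈ Ioo (0:ℝ) 1) : t ^ 4 ≤ t := by
  simpa using pow_le_pow_of_le_one ht.1.le ht.2.le (show 1 ≤ 4 by norm_num)

lemma base_lower {c t : ℝ} (hc : 0 ≤ c) (ht : t ∈ Ioo (0:ℝ) 1) :
    (1 - t) / (2 * c + 1) ≤ base c t := by
  have h4 := pow_four_le ht
  have ht2 : t ^ 2 ≤ 1 := pow_le_one₀ ht.1.le ht.2.le
  have hx : 0 ≤ c * t ^ 2 := by positivity
  have hxc : c * t ^ 2 ≤ c := mul_le_of_le_one_right hc ht2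
  have hE : 0 ≤ c ^ 2 * t ^ 4 + 1 - t ^ 4 := by
    have : 0 ≤ c ^ 2 * t ^ 4 := by positivity
    linarith [ht.2]
  have hs := Real.sq_sqrt hE
  have hs1 : Real.sqrt (c ^ 2 * t ^ 4 + 1 - t ^ 4) ≤ 1 + c * t ^ 2 := by
    rw [Real.sqrt_le_left (by positivity)]
    have : 0 ≤ t ^ 4 := by positivity
    nlinarith
  have hs2 : c * t ^ 2 ≤ Real.sqrt (c ^ 2 * t ^ 4 + 1 - t ^ 4) := by
    apply Real.le_sqrt_of_sq_le
    nlinarith [ht.2]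
  unfold base
  rw [div_le_iff₀ (by positivity)]
  set S := Real.sqrt (c ^ 2 * t ^ 4 + 1 - t ^ 4)
  have hprod : (-(c * t ^ 2) + S) * (c * t ^ 2 + S) = 1 - t ^ 4 := by linear_combination hs
  have : (-(c * t ^ 2) + S) * (c * t ^ 2 + S) ≤ (-(c * t ^ 2) + S) * (2 * c + 1) :=
    mul_le_mul_of_nonneg_left (by linarith) (by linarith)
  linarith

lemma base_pos {c t : ℝ} (hc : 0 ≤ c) (ht : t ∈ Ioo (0:ℝ) 1) : 0 < base c t :=
  (div_pos (by linarith [ht.2]) (by positivity)).trans_le (base_lower hc ht)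

lemma base_anti {c d t : ℝ} (hc : 0 ≤ c) (hcd : c ≤ d) (ht : t ∈ Ioo (0:ℝ) 1) :
    base d t ≤ base c t := by
  have h4 := pow_four_le ht
  have hxy : c * t ^ 2 ≤ d * t ^ 2 := by gcongr
  have hE : 0 ≤ c ^ 2 * t ^ 4 + 1 - t ^ 4 := by
    have : 0 ≤ c ^ 2 * t ^ 4 := by positivity
    linarith [ht.2]
  have hs := Real.sq_sqrt hE
  have hpos := base_pos hc ht
  unfold base at hpos ⊢
  set S := Real.sqrt (c ^ 2 * t ^ 4 + 1 - t ^ 4)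
  have hS : 0 ≤ S := Real.sqrt_nonneg _
  have : Real.sqrt (d ^ 2 * t ^ 4 + 1 - t ^ 4) ≤ (d * t ^ 2 - c * t ^ 2) + S := by
    rw [Real.sqrt_le_left (by linarith)]
    -- the difference of the two sides is `2 (d t² - c t²) (S - c t²)`
    nlinarith [mul_nonneg (sub_nonneg.2 hxy) (show 0 ≤ S - c * t ^ 2 by linarith)]
  linarith

lemma base_le_one {c t : ℝ} (hc : 0 ≤ c) (ht : t ∈ Ioo (0:ℝ) 1) : base c t ≤ 1 := by
  refine (base_anti le_rfl hc ht).trans ?_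
  have : 0 ≤ t ^ 4 := by positivity
  simp [base, this]

lemma intervalIntegrable_base_rpow {c : ℝ} (hc : 0 ≤ c) :
    IntervalIntegrable (fun t => base c t ^ (-(1:ℝ)/2)) volume 0 1 := by
  have h1 : IntervalIntegrable (fun t : ℝ => (1 - t) ^ (-(1:ℝ)/2)) volume 0 1 := by
    have := (intervalIntegral.intervalIntegrable_rpow' (a := 0) (b := 1)
      (show (-1:ℝ) < -(1:ℝ)/2 by norm_num)).comp_sub_left 1
    simpa using this.symm
  have h2 := h1.div_const ((2 * c + 1) ^ (-(1:ℝ)/2))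
  rw [intervalIntegrable_iff_integrableOn_Ioo_of_le zero_le_one] at h2 ⊢
  refine h2.mono' ?_ ?_
  · apply Measurable.aestronglyMeasurable
    unfold base
    fun_prop
  · refine (ae_restrict_iff' measurableSet_Ioo).2 (Eventually.of_forall fun t ht => ?_)
    have hp : 0 < (1 - t) / (2 * c + 1) := div_pos (by linarith [ht.2]) (by positivity)
    rw [Real.norm_of_nonneg (Real.rpow_nonneg (base_pos hc ht).le _),
      ← Real.div_rpow (by linarith [ht.2]) (by positivity)]
    exact Real.rpow_le_rpow_of_nonpos hp (base_lower hc ht) (by norm_num)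

lemma T_mono {c d : ℝ} (hc : 0 ≤ c) (hcd : c ≤ d) : T c ≤ T d := by
  refine intervalIntegral.integral_mono_on_of_le_Ioo zero_le_one
    (intervalIntegrable_base_rpow hc) (intervalIntegrable_base_rpow (hc.trans hcd)) fun t ht => ?_
  exact Real.rpow_le_rpow_of_nonpos (base_pos (hc.trans hcd) ht) (base_anti hc hcd ht)
    (by norm_num)

lemma one_le_T {c : ℝ} (hc : 0 ≤ c) : 1 ≤ T c := by
  have : ∫ _ in (0:ℝ)..1, (1:ℝ) ≤ T c := by
    refine intervalIntegral.integral_mono_on_of_le_Ioo zero_le_one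
      intervalIntegrable_const (intervalIntegrable_base_rpow hc) fun t ht => ?_
    exact Real.one_le_rpow_of_pos_of_le_one_of_nonpos (base_pos hc ht) (base_le_one hc ht)
      (by norm_num)
  simpa using this

/-- Rescaling `s = R t`, valid for any `R` with `a R⁴ = 3`. -/
lemma integral_eq {a k R : ℝ} (haR : a * R ^ 4 = 3) :
    ∫ s in (0:ℝ)..R, (-(k ^ 2 / 3) * s ^ 2 +
      Real.sqrt (k ^ 4 * s ^ 4 / 9 + 1 - a / 3 * s ^ 4)) ^ (-(1:ℝ)/2)
      = R * T (k ^ 2 * R ^ 2 / 3) := by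
  have h := intervalIntegral.mul_integral_comp_mul_left (a := 0) (b := 1)
    (f := fun s : ℝ => (-(k ^ 2 / 3) * s ^ 2 +
      Real.sqrt (k ^ 4 * s ^ 4 / 9 + 1 - a / 3 * s ^ 4)) ^ (-(1:ℝ)/2)) R
  rw [mul_zero, mul_one] at h
  rw [← h, T]
  congr 2
  ext t
  have e1 : -(k ^ 2 / 3) * (R * t) ^ 2 = -(k ^ 2 * R ^ 2 / 3 * t ^ 2) := by ring
  have e2 : k ^ 4 * (R * t) ^ 4 / 9 + 1 - a / 3 * (R * t) ^ 4
      = (k ^ 2 * R ^ 2 / 3) ^ 2 * t ^ 4 + 1 - t ^ 4 := by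
    linear_combination (-(t ^ 4) / 3) * haR
  simp only [base, e1, e2]

/-- The upper limit of integration in the half-period, as a function of `λ`. -/
noncomputable def radius (k lam : ℝ) : ℝ := (3 / (lam - k ^ 4)) ^ ((1:ℝ)/4)

lemma radius_pos {k lam : ℝ} (h : k ^ 4 < lam) : 0 < radius k lam :=
  Real.rpow_pos_of_pos (div_pos (by norm_num) (by linarith)) _

lemma mul_radius_pow {k lam : ℝ} (h : k ^ 4 < lam) : (lam - k ^ 4) * radius k lam ^ 4 = 3 := by
  have ha : 0 < lam - k ^ 4 := by linarith
  have h4 : radius k lam ^ 4 = 3 / (lam - k ^ 4) := by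
    rw [radius, ← Real.rpow_mul_natCast (by positivity)]
    norm_num
  rw [h4]
  field_simp

lemma radius_strictAnti {k l m : ℝ} (hl : k ^ 4 < l) (hlm : l < m) : radius k m < radius k l := by
  have h1 : 0 < l - k ^ 4 := by linarith
  have h2 : 0 < m - k ^ 4 := by linarith
  unfold radius
  apply Real.rpow_lt_rpow (by positivity) _ (by norm_num)
  gcongr

lemma radius_tendsto_atTop (k : ℝ) :
    Tendsto (radius k) (nhdsWithin (k ^ 4) (Ioi (k ^ 4))) atTop := by
  refine (tendsto_rpow_atTop (by norm_num : (0:ℝ) < 1/4)).comp ?_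
  have h : Tendsto (fun lam : ℝ => lam - k ^ 4) (nhdsWithin (k ^ 4) (Ioi (k ^ 4)))
      (nhdsWithin 0 (Ioi 0)) := by
    refine tendsto_nhdsWithin_iff.2 ⟨?_, ?_⟩
    · have : Tendsto (fun lam : ℝ => lam - k ^ 4) (nhds (k ^ 4)) (nhds (k ^ 4 - k ^ 4)) :=
        tendsto_id.sub_const _
      rw [sub_self] at this
      exact this.mono_left nhdsWithin_le_nhds
    · filter_upwards [self_mem_nhdsWithin] with lam hlam
      exact sub_pos.2 (mem_Ioi.1 hlam)
  simpa only [div_eq_mul_inv, Function.comp_def] using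
    (tendsto_inv_nhdsGT_zero.comp h).const_mul_atTop (by norm_num : (0:ℝ) < 3)

lemma radius_tendsto_zero (k : ℝ) : Tendsto (radius k) atTop (nhds 0) := by
  have h : Tendsto (fun lam : ℝ => 3 / (lam - k ^ 4)) atTop (nhds 0) :=
    (tendsto_atTop_add_const_right _ (-(k ^ 4)) tendsto_id).const_div_atTop 3
  have := h.rpow_const (p := 1/4) (Or.inr (by norm_num))
  rw [Real.zero_rpow (by norm_num)] at this
  exact this

end HalfPeriod

open HalfPeriod in
/-- The half-period
`π₄(λ,k) = 2∫₀^{(3/(λ−k⁴))^{1/4}} [−(k²/3)s² + √(k⁴s⁴/9 + 1 − ((λ−k⁴)/3)s⁴)]^{−1/2} ds`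
(defined for `k⁴ < λ`) is, for every fixed `k`, strictly decreasing in `λ` on
`(k⁴, ∞)`, tends to `+∞` as `λ → k⁴⁺`, and tends to `0` as `λ → +∞`. -/
theorem stmt_16 (pi4 : ℝ → ℝ → ℝ)
    (hpi4 : ∀ lam k : ℝ, k ^ 4 < lam → pi4 lam k =
      2 * ∫ s in (0:ℝ)..((3 / (lam - k ^ 4)) ^ ((1:ℝ)/4)),
        (-(k ^ 2 / 3) * s ^ 2 +
          Real.sqrt (k ^ 4 * s ^ 4 / 9 + 1 - (lam - k ^ 4) / 3 * s ^ 4)) ^ (-(1:ℝ)/2)) :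
    ∀ k : ℝ,
      StrictAntiOn (fun lam => pi4 lam k) (Ioi (k ^ 4)) ∧
      Tendsto (fun lam => pi4 lam k) (nhdsWithin (k ^ 4) (Ioi (k ^ 4))) atTop ∧
      Tendsto (fun lam => pi4 lam k) atTop (nhds 0) := by
  intro k
  have key : ∀ lam, k ^ 4 < lam →
      pi4 lam k = 2 * (radius k lam * T (k ^ 2 * radius k lam ^ 2 / 3)) := by
    intro lam h
    rw [hpi4 lam k h, ← integral_eq (mul_radius_pow h)]
    rfl
  have hT : ∀ lam, 1 ≤ T (k ^ 2 * radius k lam ^ 2 / 3) := fun lam => one_le_T (by positivity)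
  refine ⟨?_, ?_, ?_⟩
  · intro l hl m hm hlm
    have hr := radius_strictAnti hl hlm
    have hm0 := radius_pos hm
    simp only [key l hl, key m hm]
    have hTT : T (k ^ 2 * radius k m ^ 2 / 3) ≤ T (k ^ 2 * radius k l ^ 2 / 3) :=
      T_mono (by positivity) (by gcongr)
    have := mul_lt_mul hr hTT (by linarith [hT m]) (hm0.trans hr).le
    linarith
  · refine tendsto_atTop_mono' _ ?_ (radius_tendsto_atTop k)
    filter_upwards [self_mem_nhdsWithin] with lam hlam
    rw [key lam hlam]
    nlinarith [radius_pos hlam, hT lam]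
  · have hup : Tendsto (fun lam => 2 * (radius k lam * T (k ^ 2 / 3))) atTop (nhds 0) := by
      simpa using ((radius_tendsto_zero k).mul_const (T (k ^ 2 / 3))).const_mul 2
    refine tendsto_of_tendsto_of_tendsto_of_le_of_le' tendsto_const_nhds hup ?_ ?_
    · filter_upwards [eventually_gt_atTop (k ^ 4)] with lam hlam
      rw [key lam hlam]
      have := radius_pos hlam
      have := hT lam
      positivity
    · filter_upwards [eventually_gt_atTop (k ^ 4),
        (radius_tendsto_zero k).eventually (eventually_le_nhds zero_lt_one)] with lam hlam h1
      rw [key lam hlam]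
      have h0 := radius_pos hlam
      have hsq : radius k lam ^ 2 ≤ 1 := pow_le_one₀ h0.le h1
      have : T (k ^ 2 * radius k lam ^ 2 / 3) ≤ T (k ^ 2 / 3) := by
        refine T_mono (by positivity) ?_
        have := mul_le_of_le_one_right (sq_nonneg k) hsq
        linarith
      gcongr
end

section
/- For real k, λ with k⁴ < λ, define π₄(λ, k) := 2 ∫₀^{(3/(λ−k⁴))^{1/4}} [−(k²/3)s² + √(k⁴s⁴/9 + 1 − ((λ−k⁴)/3)s⁴)]^{−1/2} ds. Then for every fixed k ∈ ℝ and every positive integer n, the equation π₄(λ, k) = 1/n has a unique solution λ_n(k) ∈ (k⁴, ∞), and λ_n(k) → +∞ as n → ∞. -/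
open MeasureTheory Set Filter

/-!
Put `R = (3 / (lam - k⁴)) ^ (1/4)`, a decreasing bijection from `(k⁴, ∞)` onto `(0, ∞)`. The
substitution `s = R t` gives `π₄(lam, k) = 2 R J(k² R² / 3)` with
`J b = ∫₀¹ G(b, t) ^ (-1/2) dt` and `G(b, t) = -b t² + √(b² t⁴ + 1 - t⁴)`
(`pi4_eq_halfPeriod`).

For `t ∈ (0, 1)` the function `G(·, t)` is decreasing and satisfies
`(1 - t) / (2 |b| + 1) ≤ G(b, t)`, with `G(b, t) ≤ 1` when `b ≥ 0`. Hence the integrand of `J` is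
dominated, locally uniformly in `b`, by a multiple of the integrable function `(1 - t) ^ (-1/2)`,
and `J` is continuous, increasing, and at least `1` on `[0, ∞)`. So `R ↦ 2 R J(k² R² / 3)` is a
continuous strictly increasing function on `[0, ∞)` which vanishes at `0` and is at least `2 R`:
it takes each value `1 / n` exactly once (`exists_halfPeriod_eq`, `strictMonoOn_halfPeriod`), at
some `R ≤ 1 / (2 n)`, where `lam ≥ 3 / R⁴ ≥ n`.
-/

/-- The integrand of `π₄` before taking the power `-1/2`, rescaled to `t ∈ [0, 1]`; the parameter
`b` stands for `k² R² / 3`, where `R` is the upper end of the original interval. -/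
noncomputable def scaledG (b t : ℝ) : ℝ := -b * t ^ 2 + Real.sqrt (b ^ 2 * t ^ 4 + 1 - t ^ 4)

/-- The rescaled integral `∫₀¹ G(b, t) ^ (-1/2) dt`. -/
noncomputable def scaledInt (b : ℝ) : ℝ := ∫ t in (0:ℝ)..1, scaledG b t ^ (-(1:ℝ)/2)

/-- The half-period `π₄` as a function of the amplitude `R = (3 / (lam - k⁴)) ^ (1/4)`. -/
noncomputable def halfPeriod (k R : ℝ) : ℝ := 2 * (R * scaledInt (k ^ 2 / 3 * R ^ 2))

lemma scaledG_lower {b t : ℝ} (h0 : 0 < t) (h1 : t < 1) :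
    (1 - t) / (2 * |b| + 1) ≤ scaledG b t := by
  have hb := abs_nonneg b
  have hpos : 0 < 2 * |b| + 1 := by linarith
  obtain ⟨d, hd⟩ : ∃ d, d = (1 - t) / (2 * |b| + 1) := ⟨_, rfl⟩
  have hd0 : 0 ≤ d := by rw [hd]; exact div_nonneg (by linarith) hpos.le
  have hdm : d * (2 * |b| + 1) = 1 - t := by rw [hd]; field_simp
  have hd1 : d ≤ 1 := by nlinarith [mul_nonneg hd0 hb]
  have ht2 : t ^ 2 ≤ 1 := by nlinarith
  have ht4 : t ^ 4 ≤ t := by nlinarith [mul_nonneg h0.le (sub_nonneg.2 ht2), sq_nonneg t]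
  have hbt : b * t ^ 2 ≤ |b| :=
    (mul_le_mul_of_nonneg_right (le_abs_self b) (sq_nonneg t)).trans
      (mul_le_of_le_one_right hb ht2)
  have key : b * t ^ 2 + d ≤ Real.sqrt (b ^ 2 * t ^ 4 + 1 - t ^ 4) := by
    refine (le_abs_self _).trans (Real.abs_le_sqrt ?_)
    have e1 : d * (b * t ^ 2) ≤ d * |b| := mul_le_mul_of_nonneg_left hbt hd0
    have e2 : d * d ≤ d * 1 := mul_le_mul_of_nonneg_left hd1 hd0
    nlinarith
  rw [← hd]
  unfold scaledG
  linarith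

lemma scaledG_pos {b t : ℝ} (h0 : 0 < t) (h1 : t < 1) : 0 < scaledG b t :=
  lt_of_lt_of_le (div_pos (by linarith) (by positivity)) (scaledG_lower h0 h1)

lemma scaledG_le_one {b t : ℝ} (hb : 0 ≤ b) : scaledG b t ≤ 1 := by
  have : Real.sqrt (b ^ 2 * t ^ 4 + 1 - t ^ 4) ≤ b * t ^ 2 + 1 := by
    refine Real.sqrt_le_iff.2 ⟨by positivity, ?_⟩
    have : 0 ≤ b * t ^ 2 := by positivity
    nlinarith [sq_nonneg (t ^ 2)]
  unfold scaledG
  linarith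

/-- `G(·, t)` is decreasing, because `x ↦ √(x² + c) - x` is when `c ≥ 0`. -/
lemma scaledG_anti {b b' t : ℝ} (h0 : 0 < t) (h1 : t < 1) (h : b ≤ b') :
    scaledG b' t ≤ scaledG b t := by
  have ht4 : t ^ 4 ≤ 1 := pow_le_one₀ h0.le h1.le
  obtain ⟨s, hs⟩ : ∃ s, s = Real.sqrt (b ^ 2 * t ^ 4 + 1 - t ^ 4) := ⟨_, rfl⟩
  have hr : 0 ≤ b ^ 2 * t ^ 4 + 1 - t ^ 4 := by
    nlinarith [mul_nonneg (sq_nonneg b) (sq_nonneg (t^2))]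
  have hs2 : s ^ 2 = b ^ 2 * t ^ 4 + 1 - t ^ 4 := by rw [hs, Real.sq_sqrt hr]
  have hs0 : 0 ≤ s := by rw [hs]; exact Real.sqrt_nonneg _
  have hsx : b * t ^ 2 ≤ s := by
    rw [hs]
    refine (le_abs_self _).trans (Real.abs_le_sqrt ?_)
    nlinarith
  have hyx : 0 ≤ b' * t ^ 2 - b * t ^ 2 := by nlinarith [sq_nonneg t]
  have : Real.sqrt (b' ^ 2 * t ^ 4 + 1 - t ^ 4) ≤ (b' * t ^ 2 - b * t ^ 2) + s := by
    refine Real.sqrt_le_iff.2 ⟨by positivity, ?_⟩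
    nlinarith [mul_nonneg hyx (sub_nonneg.2 hsx)]
  unfold scaledG
  rw [← hs]
  linarith

lemma measurable_integrand (b : ℝ) : Measurable fun t => scaledG b t ^ (-(1:ℝ)/2) := by
  unfold scaledG
  fun_prop

lemma ae_mem_Ioo : ∀ᵐ t : ℝ, t ∈ Set.uIoc (0:ℝ) 1 → t ∈ Ioo (0:ℝ) 1 := by
  have : ∀ᵐ t : ℝ, t ≠ 1 := by simp [ae_iff]
  filter_upwards [this] with t ht h
  rw [uIoc_of_le zero_le_one] at h
  exact ⟨h.1, lt_of_le_of_ne h.2 ht⟩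

lemma integrand_le {M b t : ℝ} (hb : |b| ≤ M) (h0 : 0 < t) (h1 : t < 1) :
    ‖scaledG b t ^ (-(1:ℝ)/2)‖ ≤ (2 * M + 1) ^ ((1:ℝ)/2) * (1 - t) ^ (-(1:ℝ)/2) := by
  have hb0 := abs_nonneg b
  have hM : 0 < 2 * M + 1 := by linarith
  have h1t : 0 < 1 - t := by linarith
  rw [Real.norm_of_nonneg (Real.rpow_nonneg (scaledG_pos h0 h1).le _)]
  have e : (1 - t) / (2 * M + 1) ≤ scaledG b t :=
    (div_le_div_of_nonneg_left h1t.le (by linarith) (by linarith)).trans (scaledG_lower h0 h1)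
  refine (Real.rpow_le_rpow_of_nonpos (div_pos h1t hM) e (by norm_num)).trans_eq ?_
  rw [Real.div_rpow h1t.le hM.le, show (-(1:ℝ)/2) = -((1:ℝ)/2) by ring, Real.rpow_neg hM.le,
    div_inv_eq_mul, mul_comm]

lemma intervalIntegrable_bound (C : ℝ) :
    IntervalIntegrable (fun t : ℝ => C * (1 - t) ^ (-(1:ℝ)/2)) volume 0 1 := by
  have h := (intervalIntegral.intervalIntegrable_rpow' (a := 1) (b := 0) (r := -(1:ℝ)/2)
    (by norm_num)).comp_sub_left 1
  simp only [sub_self, sub_zero] at h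
  exact h.const_mul C

lemma intervalIntegrable_integrand (b : ℝ) :
    IntervalIntegrable (fun t => scaledG b t ^ (-(1:ℝ)/2)) volume 0 1 := by
  refine (intervalIntegrable_bound ((2 * |b| + 1) ^ ((1:ℝ)/2))).mono_fun'
    (measurable_integrand b).aestronglyMeasurable ?_
  refine (ae_restrict_iff' measurableSet_uIoc).2 ?_
  filter_upwards [ae_mem_Ioo] with t ht h
  exact integrand_le le_rfl (ht h).1 (ht h).2

lemma continuous_scaledInt : Continuous scaledInt := by
  refine continuous_iff_continuousAt.2 fun b => ?_
  refine intervalIntegral.continuousAt_of_dominated_interval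
    (bound := fun t => (2 * (|b| + 1) + 1) ^ ((1:ℝ)/2) * (1 - t) ^ (-(1:ℝ)/2))
    (Eventually.of_forall fun c => (measurable_integrand c).aestronglyMeasurable) ?_
    (intervalIntegrable_bound _) ?_
  · have : ∀ᶠ c in nhds b, |c| < |b| + 1 :=
      continuous_abs.continuousAt.eventually_lt continuousAt_const (by simp)
    filter_upwards [this] with c hc
    filter_upwards [ae_mem_Ioo] with t ht h
    exact integrand_le hc.le (ht h).1 (ht h).2
  · filter_upwards [ae_mem_Ioo] with t ht h
    refine ContinuousAt.rpow_const ?_ (Or.inl (scaledG_pos (ht h).1 (ht h).2).ne')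
    unfold scaledG
    fun_prop

lemma monotone_scaledInt : Monotone scaledInt := by
  intro b b' h
  refine intervalIntegral.integral_mono_on_of_le_Ioo zero_le_one (intervalIntegrable_integrand b)
    (intervalIntegrable_integrand b') fun t ht => ?_
  exact Real.rpow_le_rpow_of_nonpos (scaledG_pos ht.1 ht.2) (scaledG_anti ht.1 ht.2 h)
    (by norm_num)

lemma one_le_scaledInt {b : ℝ} (hb : 0 ≤ b) : 1 ≤ scaledInt b := by
  have h : ∫ _ in (0:ℝ)..1, (1:ℝ) ≤ scaledInt b := by
    refine intervalIntegral.integral_mono_on_of_le_Ioo zero_le_one intervalIntegrable_const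
      (intervalIntegrable_integrand b) fun t ht => ?_
    exact Real.one_le_rpow_of_pos_of_le_one_of_nonpos (scaledG_pos ht.1 ht.2)
      (scaledG_le_one hb) (by norm_num)
  simpa using h

lemma continuous_halfPeriod (k : ℝ) : Continuous (halfPeriod k) := by
  have := continuous_scaledInt
  unfold halfPeriod
  fun_prop

lemma two_mul_le_halfPeriod (k : ℝ) {R : ℝ} (hR : 0 ≤ R) : 2 * R ≤ halfPeriod k R := by
  have := one_le_scaledInt (b := k ^ 2 / 3 * R ^ 2) (by positivity)
  unfold halfPeriod
  nlinarith

lemma strictMonoOn_halfPeriod (k : ℝ) : StrictMonoOn (halfPeriod k) (Ici 0) := by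
  intro x hx y hy hxy
  have hx : 0 ≤ x := hx
  have h1 := one_le_scaledInt (b := k ^ 2 / 3 * y ^ 2) (by positivity)
  have h2 : scaledInt (k ^ 2 / 3 * x ^ 2) ≤ scaledInt (k ^ 2 / 3 * y ^ 2) :=
    monotone_scaledInt (by gcongr)
  unfold halfPeriod
  nlinarith [mul_le_mul_of_nonneg_left h2 hx]

lemma exists_halfPeriod_eq (k : ℝ) {c : ℝ} (hc : 0 < c) : ∃ R, 0 < R ∧ halfPeriod k R = c := by
  have h0 : halfPeriod k 0 = 0 := by simp [halfPeriod]
  obtain ⟨R, hR, hRc⟩ := intermediate_value_Icc hc.le (continuous_halfPeriod k).continuousOn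
    (show c ∈ Icc (halfPeriod k 0) (halfPeriod k c) from
      ⟨by rw [h0]; exact hc.le, by linarith [two_mul_le_halfPeriod k hc.le]⟩)
  refine ⟨R, lt_of_le_of_ne hR.1 ?_, hRc⟩
  rintro rfl
  exact hc.ne (h0.symm.trans hRc)

/-- The substitution `s = R t`. -/
lemma pi4_eq_halfPeriod {lam k R : ℝ} (hR : 0 < R) (hlam : lam - k ^ 4 = 3 / R ^ 4) :
    2 * ∫ s in (0:ℝ)..((3 / (lam - k ^ 4)) ^ ((1:ℝ)/4)),
        (-(k ^ 2 / 3) * s ^ 2 +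
          Real.sqrt (k ^ 4 * s ^ 4 / 9 + 1 - (lam - k ^ 4) / 3 * s ^ 4)) ^ (-(1:ℝ)/2)
      = halfPeriod k R := by
  have hup : (3 / (lam - k ^ 4)) ^ ((1:ℝ)/4) = R := by
    have : 3 / (lam - k ^ 4) = R ^ 4 := by rw [hlam]; field_simp
    rw [this, ← Real.rpow_natCast, ← Real.rpow_mul hR.le]
    norm_num
  have hsub := intervalIntegral.mul_integral_comp_mul_left (a := 0) (b := 1) (c := R)
    (f := fun s => (-(k ^ 2 / 3) * s ^ 2 +
      Real.sqrt (k ^ 4 * s ^ 4 / 9 + 1 - (lam - k ^ 4) / 3 * s ^ 4)) ^ (-(1:ℝ)/2))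
  rw [mul_zero, mul_one] at hsub
  rw [hup, ← hsub, halfPeriod, scaledInt]
  congr 3
  funext t
  have e1 : k ^ 4 * (R * t) ^ 4 / 9 + 1 - (lam - k ^ 4) / 3 * (R * t) ^ 4
      = (k ^ 2 / 3 * R ^ 2) ^ 2 * t ^ 4 + 1 - t ^ 4 := by
    rw [hlam]; field_simp; ring
  have e2 : -(k ^ 2 / 3) * (R * t) ^ 2 = -(k ^ 2 / 3 * R ^ 2) * t ^ 2 := by ring
  simp only [scaledG, e1, e2]

lemma exists_amplitude {lam k : ℝ} (h : k ^ 4 < lam) :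
    ∃ R, 0 < R ∧ lam - k ^ 4 = 3 / R ^ 4 := by
  have hpos : 0 < 3 / (lam - k ^ 4) := div_pos (by norm_num) (by linarith)
  refine ⟨(3 / (lam - k ^ 4)) ^ ((1:ℝ)/4), Real.rpow_pos_of_pos hpos _, ?_⟩
  have h4 : ((3 / (lam - k ^ 4)) ^ ((1:ℝ)/4)) ^ 4 = 3 / (lam - k ^ 4) := by
    rw [← Real.rpow_natCast _ 4, ← Real.rpow_mul hpos.le]
    norm_num
  have hne : lam - k ^ 4 ≠ 0 := (sub_pos.2 h).ne'
  rw [h4]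
  field_simp

/-- For every fixed `k` and every positive integer `n`, the equation
`π₄(λ, k) = 1/n` has a unique solution `λ_n(k) ∈ (k⁴, ∞)`, and `λ_n(k) → +∞`
as `n → ∞`. -/
theorem stmt_17 (pi4 : ℝ → ℝ → ℝ)
    (hpi4 : ∀ lam k : ℝ, k ^ 4 < lam → pi4 lam k =
      2 * ∫ s in (0:ℝ)..((3 / (lam - k ^ 4)) ^ ((1:ℝ)/4)),
        (-(k ^ 2 / 3) * s ^ 2 +
          Real.sqrt (k ^ 4 * s ^ 4 / 9 + 1 - (lam - k ^ 4) / 3 * s ^ 4)) ^ (-(1:ℝ)/2)) :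
    ∀ k : ℝ,
      (∀ n : ℕ, 0 < n → ∃! lam : ℝ, k ^ 4 < lam ∧ pi4 lam k = 1 / n) ∧
      (∀ lamSeq : ℕ → ℝ,
        (∀ n : ℕ, 0 < n → k ^ 4 < lamSeq n ∧ pi4 (lamSeq n) k = 1 / n) →
        Tendsto lamSeq atTop atTop) := by
  intro k
  refine ⟨fun n hn => ?_, fun lamSeq hseq => ?_⟩
  · have hc : (0:ℝ) < 1 / n := by positivity
    obtain ⟨R, hR, hRc⟩ := exists_halfPeriod_eq k hc
    have h3 : 0 < 3 / R ^ 4 := by positivity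
    have hlt : k ^ 4 < k ^ 4 + 3 / R ^ 4 := by linarith
    refine ⟨k ^ 4 + 3 / R ^ 4, ⟨hlt, ?_⟩, ?_⟩
    · rw [hpi4 _ _ hlt, pi4_eq_halfPeriod hR (by ring), hRc]
    · rintro lam ⟨hl, hlc⟩
      obtain ⟨S, hS, hSl⟩ := exists_amplitude hl
      rw [hpi4 _ _ hl, pi4_eq_halfPeriod hS hSl, ← hRc] at hlc
      have : S = R := (strictMonoOn_halfPeriod k).injOn hS.le hR.le hlc
      rw [← this]
      linarith
  · refine tendsto_atTop_mono' _ ?_ tendsto_natCast_atTop_atTop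
    filter_upwards [eventually_gt_atTop 0] with n hn
    obtain ⟨hl, hlc⟩ := hseq n hn
    obtain ⟨S, hS, hSl⟩ := exists_amplitude hl
    rw [hpi4 _ _ hl, pi4_eq_halfPeriod hS hSl] at hlc
    have hb := two_mul_le_halfPeriod k hS.le
    have hn1 : (1:ℝ) ≤ n := by exact_mod_cast hn
    rw [hlc, le_div_iff₀ (by linarith)] at hb
    -- `2 R n ≤ 1` and `n ≥ 1` give `R ≤ 1`, hence `n R⁴ ≤ n R ≤ 1 ≤ 3`.
    have hS1 : S ≤ 1 := by nlinarith
    have hS4 : S ^ 4 ≤ S := by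
      simpa using pow_le_pow_of_le_one hS.le hS1 (show 1 ≤ 4 by norm_num)
    have hfin : (n:ℝ) ≤ 3 / S ^ 4 := by
      rw [le_div_iff₀ (by positivity)]
      nlinarith
    have hk : 0 ≤ k ^ 4 := by positivity
    linarith
end

section
/- For real k, λ with k⁴ < λ, define π₄(λ, k) := 2 ∫₀^{(3/(λ−k⁴))^{1/4}} [−(k²/3)s² + √(k⁴s⁴/9 + 1 − ((λ−k⁴)/3)s⁴)]^{−1/2} ds. Then for every fixed λ > 0, π₄(λ, k) → +∞ as k → λ^{1/4} from the left (with k ∈ [0, λ^{1/4})). -/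
open MeasureTheory Set Filter

/-!
For `0 < s < S := (3 / (λ - k⁴))^{1/4}` the base of the integrand,
`g = -(k²/3)s² + √(k⁴s⁴/9 + 1 - ((λ - k⁴)/3)s⁴)`, lies in `(0, 1]`, because `√(x² + y) ≤ x + 1` for
`x ≥ 0` and `y ≤ 1`. So the integrand is at least `1`, which gives `π₄(λ, k) ≥ 2 S`, and `S → ∞` as
`k → λ^{1/4}` from the left.

The comparison of integrals needs the integrand to be integrable (`integrable_half_period`), although
it is singular at `S`. Rationalizing, `g · ((k²/3)s² + √…) = 1 - (s/S)⁴ ≥ 1 - s/S`, so `g` is bounded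
below by a multiple of `S - s` (`base_bounds`) and the integrand is dominated by a multiple
of `(S - s)^{-1/2}`.
-/

lemma base_bounds {k a S s : ℝ} (hS : 0 < S) (ha : a * S ^ 4 = 1) (hs0 : 0 < s) (hsS : s < S) :
    (S * (2 * (k ^ 2 / 3) * S ^ 2 + 1))⁻¹ * (S - s) ≤
        -(k ^ 2 / 3) * s ^ 2 + Real.sqrt (k ^ 4 * s ^ 4 / 9 + 1 - a * s ^ 4) ∧
      -(k ^ 2 / 3) * s ^ 2 + Real.sqrt (k ^ 4 * s ^ 4 / 9 + 1 - a * s ^ 4) ≤ 1 := by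
  have ha0 : 0 < a := by
    by_contra h
    nlinarith [pow_pos hS 4]
  have hsub : (S - s) / S ≤ 1 - a * s ^ 4 := by
    have h1 : a * s ^ 4 = (s / S) ^ 4 := by
      rw [div_pow, eq_div_iff (by positivity)]
      linear_combination s ^ 4 * ha
    have h2 : (s / S) ^ 4 ≤ s / S :=
      pow_le_of_le_one (by positivity) ((div_le_one hS).2 hsS.le) (by norm_num)
    have h3 : (S - s) / S = 1 - s / S := by field_simp
    linarith
  have hpos : 0 < (S - s) / S := div_pos (by linarith) hS
  have has : 0 < a * s ^ 4 := by positivity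
  have hb : 0 ≤ k ^ 2 / 3 * s ^ 2 := by positivity
  have hbS : k ^ 2 / 3 * s ^ 2 ≤ k ^ 2 / 3 * S ^ 2 := by gcongr
  set x := k ^ 2 / 3 * s ^ 2 with hx
  have hrad : k ^ 4 * s ^ 4 / 9 + 1 - a * s ^ 4 = x ^ 2 + (1 - a * s ^ 4) := by rw [hx]; ring
  rw [hrad]
  set r := Real.sqrt (x ^ 2 + (1 - a * s ^ 4)) with hr
  have hr2 : r ^ 2 = x ^ 2 + (1 - a * s ^ 4) := Real.sq_sqrt (by nlinarith [sq_nonneg x])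
  have hr1 : r ≤ x + 1 := Real.sqrt_le_iff.2 ⟨by linarith, by nlinarith⟩
  have hxr : x ≤ r := Real.le_sqrt_of_sq_le (by linarith)
  have hneg : -(k ^ 2 / 3) * s ^ 2 = -x := by rw [hx]; ring
  rw [hneg]
  refine ⟨?_, by linarith⟩
  have hC : 0 < 2 * (k ^ 2 / 3) * S ^ 2 + 1 := by positivity
  have hprod : (S - s) / S ≤ (r - x) * (2 * (k ^ 2 / 3) * S ^ 2 + 1) := by
    calc (S - s) / S ≤ (r - x) * (r + x) := by nlinarith
      _ ≤ _ := mul_le_mul_of_nonneg_left (by linarith) (by linarith)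
  rw [mul_inv, mul_right_comm, ← div_eq_mul_inv, inv_mul_eq_div, div_le_iff₀ hC]
  linarith

lemma integrable_half_period {k a S : ℝ} (hS : 0 < S) (ha : a * S ^ 4 = 1) :
    IntervalIntegrable (fun s : ℝ => (-(k ^ 2 / 3) * s ^ 2 +
      Real.sqrt (k ^ 4 * s ^ 4 / 9 + 1 - a * s ^ 4)) ^ (-(1:ℝ)/2)) volume 0 S := by
  have hdom : IntervalIntegrable (fun s : ℝ =>
      ((S * (2 * (k ^ 2 / 3) * S ^ 2 + 1))⁻¹) ^ (-(1:ℝ)/2) * (S - s) ^ (-(1:ℝ)/2)) volume 0 S := by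
    have h := (intervalIntegral.intervalIntegrable_rpow' (a := S) (b := 0)
      (r := -(1:ℝ)/2) (by norm_num)).comp_sub_left S
    simp only [sub_self, sub_zero] at h
    exact h.const_mul _
  rw [intervalIntegrable_iff_integrableOn_Ioo_of_le hS.le] at hdom ⊢
  refine Integrable.mono' hdom (Measurable.aestronglyMeasurable (by fun_prop)) ?_
  filter_upwards [ae_restrict_mem measurableSet_Ioo] with s hs
  have hC : 0 < (S * (2 * (k ^ 2 / 3) * S ^ 2 + 1))⁻¹ := by positivity
  have hs' : 0 < S - s := sub_pos.2 hs.2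
  have hlow := (base_bounds (k := k) hS ha hs.1 hs.2).1
  have hg := (mul_pos hC hs').trans_le hlow
  rw [Real.norm_of_nonneg (Real.rpow_nonneg hg.le _), ← Real.mul_rpow hC.le hs'.le]
  exact Real.rpow_le_rpow_of_nonpos (mul_pos hC hs') hlow (by norm_num)

lemma le_half_period {k a S : ℝ} (hS : 0 < S) (ha : a * S ^ 4 = 1) :
    S ≤ ∫ s in (0:ℝ)..S, (-(k ^ 2 / 3) * s ^ 2 +
      Real.sqrt (k ^ 4 * s ^ 4 / 9 + 1 - a * s ^ 4)) ^ (-(1:ℝ)/2) := by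
  calc S = ∫ _s in (0:ℝ)..S, (1:ℝ) := by simp
    _ ≤ _ := by
      -- Only the open interval: at `s = S` the base is `0` and `0 ^ (-1/2) = 0 < 1`.
      refine intervalIntegral.integral_mono_on_of_le_Ioo hS.le (by simp)
        (integrable_half_period hS ha) fun s hs => ?_
      obtain ⟨hlow, hup⟩ := base_bounds (k := k) hS ha hs.1 hs.2
      have hs' : 0 < S - s := sub_pos.2 hs.2
      exact Real.one_le_rpow_of_pos_of_le_one_of_nonpos
        (lt_of_lt_of_le (by positivity) hlow) hup (by norm_num)

/-- For every fixed `λ > 0`, the half-period `π₄(λ, k)` tends to `+∞`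
as `k → λ^{1/4}` from the left along `[0, λ^{1/4})`. -/
theorem stmt_18 (pi4 : ℝ → ℝ → ℝ)
    (hpi4 : ∀ lam k : ℝ, k ^ 4 < lam → pi4 lam k =
      2 * ∫ s in (0:ℝ)..((3 / (lam - k ^ 4)) ^ ((1:ℝ)/4)),
        (-(k ^ 2 / 3) * s ^ 2 +
          Real.sqrt (k ^ 4 * s ^ 4 / 9 + 1 - (lam - k ^ 4) / 3 * s ^ 4)) ^ (-(1:ℝ)/2)) :
    ∀ lam : ℝ, 0 < lam →
      Tendsto (fun k => pi4 lam k)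
        (nhdsWithin (lam ^ ((1:ℝ)/4)) (Ico (0:ℝ) (lam ^ ((1:ℝ)/4)))) atTop := by
  intro lam hlam
  have root_pow : ∀ x : ℝ, 0 ≤ x → (x ^ ((1:ℝ)/4)) ^ 4 = x := fun x hx => by
    rw [← Real.rpow_natCast, ← Real.rpow_mul hx]
    norm_num
  have hlt : ∀ k ∈ Ico (0:ℝ) (lam ^ ((1:ℝ)/4)), k ^ 4 < lam := fun k hk => by
    have := pow_lt_pow_left₀ hk.2 hk.1 (n := 4) (by norm_num)
    rwa [root_pow lam hlam.le] at this
  have hmem := self_mem_nhdsWithin (a := lam ^ ((1:ℝ)/4)) (s := Ico (0:ℝ) (lam ^ ((1:ℝ)/4)))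
  have hgap : Tendsto (fun k : ℝ => lam - k ^ 4)
      (nhdsWithin (lam ^ ((1:ℝ)/4)) (Ico (0:ℝ) (lam ^ ((1:ℝ)/4)))) (nhdsWithin 0 (Ioi 0)) := by
    refine tendsto_nhdsWithin_iff.2 ⟨?_, ?_⟩
    · have hc : Continuous fun k : ℝ => lam - k ^ 4 := by fun_prop
      have h := hc.tendsto (lam ^ ((1:ℝ)/4))
      rw [root_pow lam hlam.le, sub_self] at h
      exact h.mono_left nhdsWithin_le_nhds
    · filter_upwards [hmem] with k hk
      exact sub_pos.2 (hlt k hk)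
  have hend : Tendsto (fun k : ℝ => (3 / (lam - k ^ 4)) ^ ((1:ℝ)/4))
      (nhdsWithin (lam ^ ((1:ℝ)/4)) (Ico (0:ℝ) (lam ^ ((1:ℝ)/4)))) atTop :=
    (tendsto_rpow_atTop (by norm_num)).comp
      ((tendsto_inv_nhdsGT_zero.comp hgap).const_mul_atTop (by norm_num : (0:ℝ) < 3))
  refine tendsto_atTop_mono' _ ?_ hend
  filter_upwards [hmem] with k hk
  have hgk : 0 < lam - k ^ 4 := sub_pos.2 (hlt k hk)
  have hS : 0 < (3 / (lam - k ^ 4)) ^ ((1:ℝ)/4) := by positivity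
  have h := le_half_period (k := k) (a := (lam - k ^ 4) / 3) hS (by
    rw [root_pow _ (by positivity)]
    field_simp)
  rw [hpi4 lam k (hlt k hk)]
  linarith
end
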